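/- If {D₁, D₂, …, D_k} is an isometric cover of a digraph D, then gp(D) ≤ Σᵢ₌₁ᵏ gp(Dᵢ). -/

import Mathlib

/-!
Let `S` be in general position in the digraph. A geodesic of an isometric subdigraph is a
geodesic of the whole digraph (`IsGeodesic.map_val`), so `S` meets each member of the cover
in a general position set of that member (`InGenPos.preimage_val`), which has at most
`gp` many elements. These traces cover `S`, so the bound follows by adding up.
-/

variable {V : Type*}

/-- `p` is a (nonempty) directed path: distinct vertices joined by consecutive arcs. -/
def IsDipath (A : V → V → Prop) (p : List V) : Prop :=
  p ≠ [] ∧ p.Nodup ∧ p.Chain' A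

/-- `p` is a directed path from `u` to `v`. -/
def IsDipathFrom (A : V → V → Prop) (u v : V) (p : List V) : Prop :=
  IsDipath A p ∧ p.head? = some u ∧ p.getLast? = some v

/-- The directed distance from `u` to `v`, as an extended natural number
(`⊤` if `v` is not reachable from `u`). -/
noncomputable def ddist (A : V → V → Prop) (u v : V) : ℕ∞ :=
  sInf {n : ℕ∞ | ∃ p : List V, IsDipathFrom A u v p ∧ (p.length : ℕ∞) = n + 1}

/-- `p` is a geodesic (shortest directed path) from `u` to `v`. -/
def IsGeodesic (A : V → V → Prop) (u v : V) (p : List V) : Prop :=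
  IsDipathFrom A u v p ∧ (p.length : ℕ∞) = ddist A u v + 1

/-- `S` is in general position: no geodesic between two vertices of `S` passes
through a third vertex of `S`. -/
def InGenPos (A : V → V → Prop) (S : Set V) : Prop :=
  ∀ u ∈ S, ∀ v ∈ S, ∀ p : List V, IsGeodesic A u v p →
    ∀ w ∈ p, w ∈ S → w = u ∨ w = v

/-- The general position number of a digraph on a finite vertex type. -/
noncomputable def gp (V : Type*) [Fintype V] (A : V → V → Prop) : ℕ :=
  sSup {n : ℕ | ∃ S : Set V, InGenPos A S ∧ S.ncard = n}

attribute [local instance] Classical.propDecidable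

/-- `gp` bounds the size of every general position set: the
set of cardinalities is bounded by `Nat.card V`, so `sSup` is not a junk value. -/
theorem InGenPos.ncard_le_gp {V : Type*} [Fintype V] {A : V → V → Prop} {S : Set V}
    (hS : InGenPos A S) : S.ncard ≤ gp V A := by
  refine le_csSup ⟨Nat.card V, ?_⟩ ⟨S, hS, rfl⟩
  rintro n ⟨T, -, rfl⟩
  exact Set.ncard_le_card T

/-- A geodesic of an isometric subdigraph is a geodesic of the ambient digraph: it is still
a directed path, and its length is the same distance. -/
theorem IsGeodesic.map_val {V : Type*} {A B : V → V → Prop} {W : Set V}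
    (hsub : ∀ u v, B u v → A u v)
    (hiso : ∀ u v : W, ddist (fun x y : W => B x y) u v = ddist A (u : V) (v : V))
    {u v : W} {p : List W} (hp : IsGeodesic (fun x y : W => B x y) u v p) :
    IsGeodesic A (u : V) (v : V) (p.map Subtype.val) := by
  obtain ⟨⟨⟨hne, hnd, hch⟩, hhead, hlast⟩, hlen⟩ := hp
  refine ⟨⟨⟨mt List.map_eq_nil_iff.1 hne, hnd.map Subtype.val_injective, ?_⟩, ?_, ?_⟩, ?_⟩
  · exact (List.isChain_map _).2 (hch.imp fun x y h => hsub x y h)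
  · rw [List.head?_map, hhead, Option.map_some]
  · rw [List.getLast?_map, hlast, Option.map_some]
  · rw [List.length_map, hlen, hiso]

/-- The trace of a general position set on an isometric subdigraph is in general position. -/
theorem InGenPos.preimage_val {V : Type*} {A B : V → V → Prop} {W : Set V}
    (hsub : ∀ u v, B u v → A u v)
    (hiso : ∀ u v : W, ddist (fun x y : W => B x y) u v = ddist A (u : V) (v : V))
    {S : Set V} (hS : InGenPos A S) :
    InGenPos (fun x y : W => B x y) (Subtype.val ⁻¹' S) := by
  intro u hu v hv p hp w hw hwS
  simpa only [Subtype.ext_iff] using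
    hS u hu v hv _ (hp.map_val hsub hiso) w (List.mem_map_of_mem hw) hwS

/-- Isometric Cover Lemma: if `D₁, …, D_k` (with vertex sets `Vs i` and arc
relations `As i`) are isometric subdigraphs of `D` covering all vertices, then
`gp(D) ≤ Σᵢ gp(Dᵢ)`. -/
theorem gp_le_sum_of_isometric_cover [Fintype V] (A : V → V → Prop)
    (hloopless : ∀ x, ¬ A x x) (k : ℕ) (Vs : Fin k → Set V)
    (As : Fin k → V → V → Prop)
    (hsub : ∀ i, ∀ u v, As i u v → A u v ∧ u ∈ Vs i ∧ v ∈ Vs i)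
    (hiso : ∀ i, ∀ u v : (Vs i),
      ddist (fun x y : (Vs i) => As i x y) u v = ddist A (u : V) (v : V))
    (hcover : (⋃ i, Vs i) = Set.univ) :
    gp V A ≤ ∑ i : Fin k, gp (Vs i) (fun x y : (Vs i) => As i x y) := by
  refine csSup_le' ?_
  rintro n ⟨S, hS, rfl⟩
  have hunion : S = ⋃ i, Subtype.val '' (Subtype.val ⁻¹' S : Set (Vs i)) := by
    simp only [Subtype.image_preimage_coe, ← Set.iUnion_inter, hcover, Set.univ_inter]
  calc S.ncard
      = (⋃ i, Subtype.val '' (Subtype.val ⁻¹' S : Set (Vs i))).ncard := by rw [← hunion]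
    _ ≤ ∑ i, (Subtype.val '' (Subtype.val ⁻¹' S : Set (Vs i))).ncard :=
        Set.ncard_iUnion_le_of_fintype _
    _ ≤ _ := Finset.sum_le_sum fun i _ => by
        rw [Set.ncard_image_of_injective _ Subtype.val_injective]
        exact (hS.preimage_val (fun u v h => (hsub i u v h).1) (hiso i)).ncard_le_gp
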